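/- Let e ≥ 1 and q = 2^(2e+1). Then the three natural numbers q − 1, q + 2^(e+1) + 1 and q − 2^(e+1) + 1 are all odd and pairwise coprime (so that together with 4 they form four pairwise coprime numbers). -/

import Mathlib

/-!
Write `r = 2 ^ (e + 1)`, so that `r ^ 2 = 2 * q`. Then `(q + r + 1) * (q - r + 1) = q ^ 2 + 1`,
and `q ^ 2 + 1 = 2 + (q - 1) * (q + 1)` has no common factor with the odd number `q - 1`. The two
factors differ by `2 * r`; they are odd, and a prime dividing both them and `r` would divide
`q + 1` and `2 * q = r ^ 2`, which are coprime.
-/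

section CommRing

variable {R : Type*} [CommRing R] {q r : R}

theorem isCoprime_two_right_of_odd (hq : Odd q) : IsCoprime q 2 := by
  obtain ⟨k, rfl⟩ := hq
  exact ⟨1, -k, by ring⟩

theorem add_add_one_mul_sub_add_one (h : r ^ 2 = 2 * q) :
    (q + r + 1) * (q - r + 1) = q ^ 2 + 1 := by
  linear_combination -h

theorem isCoprime_sub_one_sq_add_one (hq : Even q) : IsCoprime (q - 1) (q ^ 2 + 1) := by
  have h : IsCoprime (q - 1) (2 + (q - 1) * (q + 1)) :=
    (isCoprime_two_right_of_odd (hq.sub_odd odd_one)).add_mul_left_right (q + 1)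
  convert h using 1
  ring

theorem isCoprime_add_one_of_sq_eq_two_mul (hq : Even q) (h : r ^ 2 = 2 * q) :
    IsCoprime (q + 1) r := by
  have hself : IsCoprime (q + 1) q := ⟨1, -1, by ring⟩
  have hsq : IsCoprime (q + 1) (r ^ 2) :=
    h ▸ (isCoprime_two_right_of_odd hq.add_one).mul_right hself
  exact (IsCoprime.pow_right_iff two_pos).mp hsq

theorem isCoprime_add_add_one_sub_add_one (hq : Even q) (hr : Even r) (h : r ^ 2 = 2 * q) :
    IsCoprime (q + r + 1) (q - r + 1) := by
  have htwo : IsCoprime (q + r + 1) 2 := isCoprime_two_right_of_odd (hq.add hr).add_one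
  have hroot : IsCoprime (q + r + 1) r := by
    convert (isCoprime_add_one_of_sq_eq_two_mul hq h).add_mul_left_left 1 using 1
    ring
  have hdiff : IsCoprime (q + r + 1) (-(2 * r)) := (htwo.mul_right hroot).neg_right
  convert hdiff.add_mul_left_right 1 using 1
  ring

end CommRing

theorem even_root_of_sq_eq_two_mul {q r : ℕ} (h : r ^ 2 = 2 * q) : Even r :=
  (Nat.even_pow.mp (h ▸ even_two_mul q)).1

theorem even_of_sq_eq_two_mul {q r : ℕ} (h : r ^ 2 = 2 * q) : Even q := by
  obtain ⟨m, rfl⟩ := (even_root_of_sq_eq_two_mul h).two_dvd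
  exact ⟨m ^ 2, by linarith⟩

theorem le_of_sq_eq_two_mul {q r : ℕ} (h : r ^ 2 = 2 * q) : r ≤ q := by
  obtain ⟨m, rfl⟩ := (even_root_of_sq_eq_two_mul h).two_dvd
  have hm : m ≤ m ^ 2 := Nat.le_self_pow two_ne_zero m
  linarith

theorem coprime_four_left_of_odd {n : ℕ} (hn : Odd n) : Nat.Coprime 4 n :=
  hn.coprime_two_left.pow_left 2

theorem suzuki_orders_pairwise_coprime_general {q r : ℕ} (hq : q ≠ 0) (h : r ^ 2 = 2 * q) :
    Odd (q - 1) ∧ Odd (q + r + 1) ∧ Odd (q - r + 1) ∧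
    Nat.Coprime (q - 1) (q + r + 1) ∧
    Nat.Coprime (q - 1) (q - r + 1) ∧
    Nat.Coprime (q + r + 1) (q - r + 1) ∧
    Nat.Coprime 4 (q - 1) ∧
    Nat.Coprime 4 (q + r + 1) ∧
    Nat.Coprime 4 (q - r + 1) := by
  have hqpos : 1 ≤ q := Nat.one_le_iff_ne_zero.mpr hq
  have hrq : r ≤ q := le_of_sq_eq_two_mul h
  have hqe : Even q := even_of_sq_eq_two_mul h
  have hre : Even r := even_root_of_sq_eq_two_mul h
  have hsub_one_odd : Odd (q - 1) := Nat.Even.sub_odd hqpos hqe odd_one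
  have hadd_odd : Odd (q + r + 1) := (hqe.add hre).add_one
  have hsub_odd : Odd (q - r + 1) := (hqe.tsub hre).add_one
  have hz : (r : ℤ) ^ 2 = 2 * q := mod_cast h
  have hqz : Even (q : ℤ) := mod_cast hqe
  have hrz : Even (r : ℤ) := mod_cast hre
  have hprod : IsCoprime ((q : ℤ) - 1) ((q + r + 1) * (q - r + 1)) :=
    add_add_one_mul_sub_add_one hz ▸ isCoprime_sub_one_sq_add_one hqz
  refine ⟨hsub_one_odd, hadd_odd, hsub_odd, ?_, ?_, ?_, coprime_four_left_of_odd hsub_one_odd,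
    coprime_four_left_of_odd hadd_odd, coprime_four_left_of_odd hsub_odd⟩
  all_goals
    rw [← Nat.isCoprime_iff_coprime]
    push_cast [hqpos, hrq]
  · exact hprod.of_mul_right_left
  · exact hprod.of_mul_right_right
  · exact isCoprime_add_add_one_sub_add_one hqz hrz hz

/-- For `q = 2 ^ (2 * e + 1)` with `e ≥ 1`, the numbers `q - 1`, `q + 2 ^ (e + 1) + 1`
and `q - 2 ^ (e + 1) + 1` are all odd and pairwise coprime; together with `4` they form
four pairwise coprime numbers. -/
theorem suzuki_orders_pairwise_coprime (e q : ℕ) (he : 1 ≤ e) (hq : q = 2 ^ (2 * e + 1)) :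
    Odd (q - 1) ∧ Odd (q + 2 ^ (e + 1) + 1) ∧ Odd (q - 2 ^ (e + 1) + 1) ∧
    Nat.Coprime (q - 1) (q + 2 ^ (e + 1) + 1) ∧
    Nat.Coprime (q - 1) (q - 2 ^ (e + 1) + 1) ∧
    Nat.Coprime (q + 2 ^ (e + 1) + 1) (q - 2 ^ (e + 1) + 1) ∧
    Nat.Coprime 4 (q - 1) ∧
    Nat.Coprime 4 (q + 2 ^ (e + 1) + 1) ∧
    Nat.Coprime 4 (q - 2 ^ (e + 1) + 1) := by
  subst hq
  exact suzuki_orders_pairwise_coprime_general (by positivity) (by ring)
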